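/- Let γ_{AB} be a pure bipartite covariance matrix of an n-mode system (real symmetric, γ_{AB} + iΩ positive semidefinite, det γ_{AB} = 1) with blocks γ_{AB} = [[γ_A, ς],[ςᵀ, γ_B]]. Then det γ_A = det γ_B, and the Gaussian Rényi-2 one-way classical correlations equal the Rényi-2 entropy of the marginal: J₂(γ_{A|B}) = (1/2) ln det γ_A. Consequently (1/2) I₂(γ_{A:B}) = J₂(γ_{A|B}) = D₂(γ_{A|B}) = S₂(γ_A) for pure bipartite Gaussian states. -/

import Mathlib

/-! Write `G = [[A, C], [Cᵀ, B]]` for the pure covariance matrix and `J = J_A ⊕ J_B` for the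
symplectic form.

In real terms `γ + iJ ⪰ 0` says `2 xᵀJy ≤ xᵀγx + yᵀγy` for all real `x, y`
(`RealUncertainty`), that is, `[[γ, -J], [-Jᵀ, γ]] ⪰ 0`. Its Schur complement is
`γ - Jᵀ γ⁻¹ J ⪰ 0`, and strict monotonicity of the determinant (`det_le_of_sub_posSemidef`,
`eq_of_sub_posSemidef`) gives `det γ ≥ 1`, with `γ = Jᵀ γ⁻¹ J` when `det γ = 1`. For the pure
`G` therefore `G⁻¹ = J G Jᵀ`, so the diagonal blocks of `G⁻¹` are `J_A A J_Aᵀ` and `J_B B J_Bᵀ`.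

* Jacobi's complementary minor identity `det G · det (G⁻¹)_A = det B` yields `det A = det B`.
* After a measurement with seed `Γ`, the conditional matrix `S = A - C (B + Γ)⁻¹ Cᵀ` again obeys
  the uncertainty relation (`RealUncertainty.conditional`), so `det S ≥ 1`; hence every
  measurement gains at most `(1/2) ln det A`.
* The seed `Γ = 1` attains this bound (`det_conditional_one`):
  `det (B + 1) · det S = det (G + (0 ⊕ 1)) = det G · det (1 + (G⁻¹)_B) = det (1 + B)`,
  so `det S = 1`. -/

open Matrix
open scoped ComplexOrder

/-- The standard symplectic form `Ω = ⊕ₖ [[0,1],[−1,0]]` on a phase space with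
modes indexed by `ι`; each mode carries a pair of canonical quadratures,
indexed by `Fin 2`. -/
def symplecticForm (ι : Type*) [DecidableEq ι] :
    Matrix (ι × Fin 2) (ι × Fin 2) ℝ :=
  fun p q =>
    if p.1 = q.1 ∧ p.2 = 0 ∧ q.2 = 1 then 1
    else if p.1 = q.1 ∧ p.2 = 1 ∧ q.2 = 0 then -1
    else 0

/-- The bona fide (uncertainty) condition on a covariance matrix `γ`:
`γ + iΩ` is positive semidefinite as a complex Hermitian matrix. -/
def Uncertainty {ι : Type*} [Fintype ι] [DecidableEq ι]
    (γ : Matrix (ι × Fin 2) (ι × Fin 2) ℝ) : Prop :=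
  (γ.map Complex.ofReal + Complex.I • (symplecticForm ι).map Complex.ofReal).PosSemidef

variable {α β : Type*} [Fintype α] [Fintype β] [DecidableEq α] [DecidableEq β]

/-- Diagonal block of a bipartite covariance matrix on subsystem `A`. -/
def blkA (γ : Matrix ((α ⊕ β) × Fin 2) ((α ⊕ β) × Fin 2) ℝ) :
    Matrix (α × Fin 2) (α × Fin 2) ℝ :=
  γ.submatrix (fun p => (Sum.inl p.1, p.2)) (fun p => (Sum.inl p.1, p.2))

/-- Diagonal block of a bipartite covariance matrix on subsystem `B`. -/
def blkB (γ : Matrix ((α ⊕ β) × Fin 2) ((α ⊕ β) × Fin 2) ℝ) :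
    Matrix (β × Fin 2) (β × Fin 2) ℝ :=
  γ.submatrix (fun p => (Sum.inr p.1, p.2)) (fun p => (Sum.inr p.1, p.2))

/-- Off-diagonal block `ς` of a bipartite covariance matrix. -/
def offAB (γ : Matrix ((α ⊕ β) × Fin 2) ((α ⊕ β) × Fin 2) ℝ) :
    Matrix (α × Fin 2) (β × Fin 2) ℝ :=
  γ.submatrix (fun p => (Sum.inl p.1, p.2)) (fun p => (Sum.inr p.1, p.2))

/-- The Gaussian Rényi-2 entanglement `E₂(γ_{A:B})` of a bipartite covariance
matrix: the infimum of `(1/2) ln det σ_A` over pure covariance matrices `σ`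
(real symmetric, `σ + iΩ ⪰ 0`, `det σ = 1`) with `σ ≤ γ` in the Loewner
order. -/
noncomputable def E2 (γ : Matrix ((α ⊕ β) × Fin 2) ((α ⊕ β) × Fin 2) ℝ) : ℝ :=
  sInf {x | ∃ σ : Matrix ((α ⊕ β) × Fin 2) ((α ⊕ β) × Fin 2) ℝ,
    σ.IsSymm ∧ Uncertainty σ ∧ σ.det = 1 ∧ (γ - σ).PosSemidef ∧
    x = (1/2) * Real.log (blkA σ).det}

/-- The Gaussian Rényi-2 one-way classical correlations `J₂(γ_{A|B})`:
the supremum over Gaussian measurement seeds `Γ` on `B` of the decrease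
`(1/2) ln ( det γ_A / det(γ_A − ς (γ_B + Γ)^{-1} ςᵀ) )` of the Rényi-2
entropy of `A`. -/
noncomputable def J2 (γ : Matrix ((α ⊕ β) × Fin 2) ((α ⊕ β) × Fin 2) ℝ) : ℝ :=
  sSup {x | ∃ Γ : Matrix (β × Fin 2) (β × Fin 2) ℝ,
    Γ.IsSymm ∧ Uncertainty Γ ∧
    x = (1/2) * Real.log ((blkA γ).det /
      (blkA γ - offAB γ * (blkB γ + Γ)⁻¹ * (offAB γ)ᵀ).det)}

/-! ### Determinants and the Loewner order -/

section Determinant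

variable {m : Type*} [Fintype m] [DecidableEq m]

/-- Expanding `∏ (1 + λᵢ)` over the eigenvalues of `K ⪰ 0` to first order. -/
lemma one_add_trace_le_det_one_add {K : Matrix m m ℝ} (hK : K.PosSemidef) :
    1 + K.trace ≤ (1 + K).det := by
  have hdet : (1 + K).det = ∏ i, (1 + hK.1.eigenvalues i) := by
    have h : 1 + K = Unitary.conjStarAlgAut ℝ _ hK.1.eigenvectorUnitary
        (diagonal fun i => 1 + hK.1.eigenvalues i) := by
      have hd : (diagonal fun i => 1 + hK.1.eigenvalues i) =
          1 + diagonal (RCLike.ofReal ∘ hK.1.eigenvalues : m → ℝ) := by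
        rw [← diagonal_one, diagonal_add]; rfl
      rw [hd, map_add, map_one, ← hK.1.spectral_theorem]
    rw [h, Unitary.conjStarAlgAut_apply, det_mul_right_comm, ← Unitary.coe_star,
      Unitary.coe_mul_star_self, one_mul, det_diagonal]
  have htr : K.trace = ∑ i, hK.1.eigenvalues i := by
    simpa using hK.1.trace_eq_sum_eigenvalues
  rw [hdet, htr]
  have h0 := hK.eigenvalues_nonneg
  induction (Finset.univ : Finset m) using Finset.induction_on with
  | empty => simp
  | insert a s ha ih =>
    rw [Finset.sum_insert ha, Finset.prod_insert ha]
    have := Finset.sum_nonneg fun i (_ : i ∈ s) => h0 i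
    nlinarith [mul_nonneg (h0 a) this, mul_le_mul_of_nonneg_left ih (h0 a)]

open scoped MatrixOrder in
/-- Conjugating by the factor of `Q = Lᴴ L` turns `Q ≤ P` into `1 ≤ 1 + K`. -/
lemma exists_factor_of_sub_posSemidef {P Q : Matrix m m ℝ} (hQ : Q.PosDef)
    (h : (P - Q).PosSemidef) :
    ∃ L K : Matrix m m ℝ, K.PosSemidef ∧ Q = Lᴴ * L ∧ P = Lᴴ * (1 + K) * L := by
  obtain ⟨L, hL, hQL⟩ := CStarAlgebra.isStrictlyPositive_iff_eq_star_mul_self.mp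
    hQ.isStrictlyPositive
  rw [star_eq_conjTranspose] at hQL
  have hLd := (isUnit_iff_isUnit_det _).mp hL
  have h1 : L⁻¹ * L = 1 := nonsing_inv_mul _ hLd
  have h2 : Lᴴ * L⁻¹ᴴ = 1 := by rw [← conjTranspose_mul, h1, conjTranspose_one]
  refine ⟨L, L⁻¹ᴴ * (P - Q) * L⁻¹, h.conjTranspose_mul_mul_same _, hQL, ?_⟩
  have : Lᴴ * (L⁻¹ᴴ * (P - Q) * L⁻¹) * L = P - Q := by
    calc _ = (Lᴴ * L⁻¹ᴴ) * (P - Q) * (L⁻¹ * L) := by simp only [Matrix.mul_assoc]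
      _ = _ := by rw [h1, h2, Matrix.one_mul, Matrix.mul_one]
  rw [Matrix.mul_add, Matrix.add_mul, this, Matrix.mul_one, ← hQL]
  abel

lemma det_le_of_sub_posSemidef {P Q : Matrix m m ℝ} (hQ : Q.PosDef)
    (h : (P - Q).PosSemidef) : Q.det ≤ P.det := by
  obtain ⟨L, K, hK, rfl, rfl⟩ := exists_factor_of_sub_posSemidef hQ h
  have h1 := one_add_trace_le_det_one_add hK
  have h2 := hK.trace_nonneg
  have h3 := hQ.det_pos
  simp only [det_mul] at h3 ⊢
  nlinarith

/-- Equality case of determinant monotonicity in the Loewner order. -/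
lemma eq_of_sub_posSemidef {P Q : Matrix m m ℝ} (hQ : Q.PosDef)
    (h : (P - Q).PosSemidef) (hdet : P.det ≤ Q.det) : P = Q := by
  obtain ⟨L, K, hK, rfl, rfl⟩ := exists_factor_of_sub_posSemidef hQ h
  have h1 := one_add_trace_le_det_one_add hK
  have h2 := hK.trace_nonneg
  have h3 := hQ.det_pos
  simp only [det_mul] at h3 hdet
  have h4 : K.trace = 0 := by nlinarith
  rw [hK.trace_eq_zero_iff.mp h4, add_zero, Matrix.mul_one]

end Determinant

/-! ### The uncertainty relation in real form -/

section Uncertainty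

variable {m n : Type*} [Fintype m] [DecidableEq m] [Fintype n] [DecidableEq n]

/-- The condition `γ + iJ ⪰ 0` tested on complex vectors `x + iy`, written with the real
vectors `x` and `y`. -/
def RealUncertainty (J γ : Matrix m m ℝ) : Prop :=
  ∀ x y : m → ℝ, 2 * (x ⬝ᵥ J *ᵥ y) ≤ x ⬝ᵥ γ *ᵥ x + y ⬝ᵥ γ *ᵥ y

/-- The form `xᵀJy` of an antisymmetric `J` changes sign under `x ↔ y`. -/
lemma dotProduct_mulVec_antisymm {J : Matrix m m ℝ} (hJ : Jᵀ = -J) (x y : m → ℝ) :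
    y ⬝ᵥ J *ᵥ x = -(x ⬝ᵥ J *ᵥ y) := by
  rw [dotProduct_mulVec, ← mulVec_transpose, hJ, neg_mulVec, neg_dotProduct, dotProduct_comm]

lemma realUncertainty_of_posSemidef {J γ : Matrix m m ℝ} (hJ : Jᵀ = -J)
    (h : (γ.map Complex.ofReal + Complex.I • J.map Complex.ofReal).PosSemidef) :
    RealUncertainty J γ := by
  intro x y
  have key := h.re_dotProduct_nonneg
    (fun i => (x i : ℂ) + Complex.I * (y i : ℂ))
  have hexp : RCLike.re (star (fun i => (x i : ℂ) + Complex.I * (y i : ℂ)) ⬝ᵥ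
      (γ.map Complex.ofReal + Complex.I • J.map Complex.ofReal) *ᵥ
        (fun i => (x i : ℂ) + Complex.I * (y i : ℂ))) =
      x ⬝ᵥ γ *ᵥ x + y ⬝ᵥ γ *ᵥ y - x ⬝ᵥ J *ᵥ y + y ⬝ᵥ J *ᵥ x := by
    simp only [dotProduct, mulVec, Finset.mul_sum, map_sum, ← Finset.sum_add_distrib,
      ← Finset.sum_sub_distrib]
    refine Finset.sum_congr rfl fun i _ => Finset.sum_congr rfl fun j _ => ?_
    simp
    ring
  rw [hexp, dotProduct_mulVec_antisymm hJ x y] at key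
  linarith

namespace RealUncertainty

variable {J γ : Matrix m m ℝ}

lemma posDef (hJ' : Jᵀ * J = 1) (hγ : γ.IsSymm) (h : RealUncertainty J γ) :
    γ.PosDef := by
  refine .of_dotProduct_mulVec_pos (by simpa using hγ) fun x hx => ?_
  rw [star_trivial]
  by_contra! hle
  have hJx : 0 < x ⬝ᵥ x := by
    rcases (dotProduct_self_star_nonneg x).lt_or_eq with h | h
    · simpa using h
    · exact absurd (dotProduct_star_self_eq_zero.mp (by simpa using h.symm)) hx
  set y := Jᵀ *ᵥ x
  have hy : x ⬝ᵥ J *ᵥ y = x ⬝ᵥ x := by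
    rw [mulVec_mulVec, mul_eq_one_comm.mp hJ', one_mulVec]
  -- For `xᵀγx ≤ 0`, testing with `s • y` for a small `s > 0` makes the term linear in `s` win.
  set c := y ⬝ᵥ γ *ᵥ y
  have h1 : ∀ s : ℝ, 2 * (s * (x ⬝ᵥ x)) ≤ s * (s * c) := fun s => by
    have := h x (s • y)
    simp only [mulVec_smul, dotProduct_smul, smul_dotProduct, smul_eq_mul, hy] at this
    linarith
  have hc : 0 < c := by nlinarith [h1 1]
  have h2 := h1 ((x ⬝ᵥ x) / c)
  have h3 : (x ⬝ᵥ x) / c * ((x ⬝ᵥ x) / c * c) = (x ⬝ᵥ x) / c * (x ⬝ᵥ x) := by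
    field_simp
  have h4 : 0 < (x ⬝ᵥ x) / c * (x ⬝ᵥ x) := by positivity
  linarith

lemma sub_inv_posSemidef (hJ' : Jᵀ * J = 1) (hγ : γ.IsSymm)
    (h : RealUncertainty J γ) : (γ - Jᵀ * γ⁻¹ * J).PosSemidef := by
  have hpd := h.posDef hJ' hγ
  let := hpd.isUnit.invertible
  have hblk : (fromBlocks γ (-J) (-J)ᴴ γ).PosSemidef := by
    refine .of_dotProduct_mulVec_nonneg (hpd.1.fromBlocks rfl hpd.1) fun v => ?_
    rw [star_trivial, ← Sum.elim_comp_inl_inr v, fromBlocks_mulVec,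
      sumElim_dotProduct_sumElim]
    have := h (v ∘ Sum.inl) (v ∘ Sum.inr)
    have e : (v ∘ Sum.inr) ⬝ᵥ Jᵀ *ᵥ (v ∘ Sum.inl) = (v ∘ Sum.inl) ⬝ᵥ J *ᵥ (v ∘ Sum.inr) := by
      rw [mulVec_transpose, dotProduct_comm, dotProduct_mulVec]
    simp only [conjTranspose_eq_transpose_of_trivial, transpose_neg, Sum.elim_comp_inl,
      Sum.elim_comp_inr, dotProduct_add, neg_mulVec, dotProduct_neg, e]
    linarith
  simpa using (hpd.fromBlocks₁₁ (-J) γ).mp hblk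

lemma det_conj_inv (hJ' : Jᵀ * J = 1) : (Jᵀ * γ⁻¹ * J).det = γ.det⁻¹ := by
  have h1 : Jᵀ.det * J.det = 1 := by rw [← det_mul, hJ', det_one]
  rw [det_mul, det_mul, mul_right_comm, h1, one_mul, det_nonsing_inv, Ring.inverse_eq_inv]

lemma conj_inv_posDef (hJ' : Jᵀ * J = 1) (hγ : γ.IsSymm) (h : RealUncertainty J γ) :
    (Jᵀ * γ⁻¹ * J).PosDef := by
  have := (h.posDef hJ' hγ).inv.conjTranspose_mul_mul_same (B := J)
    (mulVec_injective_of_isUnit (.of_mul_eq_one_right _ hJ'))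
  simpa using this

lemma one_le_det (hJ' : Jᵀ * J = 1) (hγ : γ.IsSymm) (h : RealUncertainty J γ) :
    1 ≤ γ.det := by
  have h1 := det_le_of_sub_posSemidef (h.conj_inv_posDef hJ' hγ) (h.sub_inv_posSemidef hJ' hγ)
  rw [det_conj_inv hJ'] at h1
  have h0 := (h.posDef hJ' hγ).det_pos
  have h2 : γ.det * γ.det⁻¹ = 1 := mul_inv_cancel₀ h0.ne'
  nlinarith

/-- A pure covariance matrix satisfies `γ⁻¹ = J γ Jᵀ`, which for antisymmetric `J` says that `γ`
is symplectic, `γ J γ = J`. -/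
lemma mul_conj_eq_one (hJ' : Jᵀ * J = 1) (hγ : γ.IsSymm) (h : RealUncertainty J γ)
    (hdet : γ.det = 1) : γ * (J * γ * Jᵀ) = 1 := by
  have h1 := eq_of_sub_posSemidef (h.conj_inv_posDef hJ' hγ) (h.sub_inv_posSemidef hJ' hγ)
    (by rw [det_conj_inv hJ', hdet, inv_one])
  have hJ'' : J * Jᵀ = 1 := mul_eq_one_comm.mp hJ'
  have h2 : J * γ * Jᵀ = γ⁻¹ := by
    calc J * γ * Jᵀ = J * (Jᵀ * γ⁻¹ * J) * Jᵀ := congrArg (J * · * Jᵀ) h1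
      _ = (J * Jᵀ) * γ⁻¹ * (J * Jᵀ) := by simp only [Matrix.mul_assoc]
      _ = γ⁻¹ := by rw [hJ'', Matrix.one_mul, Matrix.mul_one]
  rw [h2, mul_nonsing_inv _ (by simp [hdet])]

end RealUncertainty

/-! ### Bipartite block matrices and conditional states -/

variable {JA A : Matrix m m ℝ} {JB B Γ : Matrix n n ℝ} {C : Matrix m n ℝ}

/-- The conditional covariance matrix after a measurement with seed `Γ` is bona fide. Each
`w` on `A` is extended by the minimiser `z = -(B + Γ)⁻¹ Cᵀ w` on `B`, and the symplectic form
on `B` cancels between the relation for `G` at `(w₁, z₁), (w₂, z₂)` and the one for `Γ` at the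
swapped pair `z₂, z₁`. -/
lemma RealUncertainty.conditional (hJB : JBᵀ = -JB)
    (hG : RealUncertainty (fromBlocks JA 0 0 JB) (fromBlocks A C Cᵀ B))
    (hΓ : RealUncertainty JB Γ) (hD : (B + Γ).PosDef) :
    RealUncertainty JA (A - C * (B + Γ)⁻¹ * Cᵀ) := by
  let := hD.isUnit.invertible
  set z : (m → ℝ) → n → ℝ := fun w => -(((B + Γ)⁻¹ * Cᵀ) *ᵥ w)
  have hz : ∀ w, Sum.elim w (z w) ⬝ᵥ fromBlocks A C Cᵀ B *ᵥ Sum.elim w (z w) +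
      z w ⬝ᵥ Γ *ᵥ z w = w ⬝ᵥ (A - C * (B + Γ)⁻¹ * Cᵀ) *ᵥ w := by
    intro w
    have := schur_complement_eq₂₂ A C w (z w) hD.1
    simp only [star_trivial, conjTranspose_eq_transpose_of_trivial, ← dotProduct_mulVec] at this
    rw [show ((B + Γ)⁻¹ * Cᵀ) *ᵥ w + z w = 0 from add_neg_cancel _, zero_dotProduct,
      zero_add] at this
    rw [← this]
    simp only [fromBlocks_mulVec, Sum.elim_comp_inl, Sum.elim_comp_inr,
      sumElim_dotProduct_sumElim, add_mulVec, dotProduct_add]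
    ring
  intro x y
  have h1 := hG (Sum.elim x (z x)) (Sum.elim y (z y))
  have h2 := hΓ (z y) (z x)
  rw [dotProduct_mulVec_antisymm hJB (z x) (z y)] at h2
  rw [← hz x, ← hz y]
  have h3 : Sum.elim x (z x) ⬝ᵥ fromBlocks JA 0 0 JB *ᵥ Sum.elim y (z y) =
      x ⬝ᵥ JA *ᵥ y + z x ⬝ᵥ JB *ᵥ z y := by
    simp [fromBlocks_mulVec, sumElim_dotProduct_sumElim]
  rw [h3] at h1
  linarith

/-- The blocks of `J G Jᵀ`, which is `G⁻¹` when `G` is pure. -/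
lemma conj_fromBlocks :
    fromBlocks JA 0 0 JB * fromBlocks A C Cᵀ B * (fromBlocks JA 0 0 JB)ᵀ =
      fromBlocks (JA * A * JAᵀ) (JA * C * JBᵀ) (JB * Cᵀ * JAᵀ) (JB * B * JBᵀ) := by
  simp [fromBlocks_transpose, fromBlocks_multiply]

/-- Jacobi's complementary minor identity for the block `A` of `G⁻¹ = J G Jᵀ`. -/
lemma det_blocks_eq (hJA : JAᵀ * JA = 1) (hdet : (fromBlocks A C Cᵀ B).det = 1)
    (hinv : fromBlocks A C Cᵀ B * (fromBlocks JA 0 0 JB * fromBlocks A C Cᵀ B *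
      (fromBlocks JA 0 0 JB)ᵀ) = 1) : A.det = B.det := by
  rw [conj_fromBlocks, fromBlocks_multiply, ← fromBlocks_one, fromBlocks_inj] at hinv
  obtain ⟨h11, -, h21, -⟩ := hinv
  have h : fromBlocks A C Cᵀ B * fromBlocks (JA * A * JAᵀ) 0 (JB * Cᵀ * JAᵀ) 1 =
      fromBlocks 1 C 0 B := by
    rw [fromBlocks_multiply, h11, h21]; simp
  have h1 := congrArg det h
  have h2 : JAᵀ.det * JA.det = 1 := by rw [← det_mul, hJA, det_one]
  rw [det_mul, hdet, det_fromBlocks_zero₁₂, det_fromBlocks_zero₂₁] at h1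
  simp only [det_one, one_mul, mul_one, det_mul] at h1
  rw [← h1]
  linear_combination (-A.det) * h2

/-- The seed `Γ = 1` (heterodyne detection) on half of a pure state leaves the other half
pure. -/
lemma det_conditional_one (hJB : JBᵀ * JB = 1) (hB : B.PosDef)
    (hdet : (fromBlocks A C Cᵀ B).det = 1)
    (hinv : fromBlocks A C Cᵀ B * (fromBlocks JA 0 0 JB * fromBlocks A C Cᵀ B *
      (fromBlocks JA 0 0 JB)ᵀ) = 1) :
    (A - C * (B + 1)⁻¹ * Cᵀ).det = 1 := by
  have hD : (B + 1).PosDef := hB.add .one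
  let := hD.isUnit.invertible
  rw [conj_fromBlocks, fromBlocks_multiply, ← fromBlocks_one, fromBlocks_inj] at hinv
  obtain ⟨-, h12, -, h22⟩ := hinv
  have h : fromBlocks A C Cᵀ B * fromBlocks 1 (JA * C * JBᵀ) 0 (1 + JB * B * JBᵀ) =
      fromBlocks A C Cᵀ (B + 1) := by
    rw [fromBlocks_multiply, fromBlocks_inj]
    refine ⟨by simp, ?_, by simp, ?_⟩
    · rw [Matrix.mul_add, Matrix.mul_one, add_left_comm, h12, add_zero]
    · rw [Matrix.mul_add, Matrix.mul_one, add_left_comm, h22]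
  have hJB' : JB * JBᵀ = 1 := mul_eq_one_comm.mp hJB
  have h2 : JBᵀ.det * JB.det = 1 := by rw [← det_mul, hJB, det_one]
  have h3 : (1 + JB * B * JBᵀ).det = (B + 1).det := by
    have : 1 + JB * B * JBᵀ = JB * (B + 1) * JBᵀ := by
      rw [Matrix.mul_add, Matrix.add_mul, Matrix.mul_one, hJB', add_comm]
    rw [this, det_mul, det_mul]
    linear_combination (B + 1).det * h2
  have h1 := congrArg det h
  rw [det_mul, hdet, det_fromBlocks_zero₂₁, det_one, one_mul, one_mul, h3,
    det_fromBlocks₂₂, invOf_eq_nonsing_inv] at h1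
  exact (mul_eq_left₀ hD.det_pos.ne').mp h1.symm

end Uncertainty

/-! ### The standard symplectic form -/

section Symplectic

variable {ι : Type*} [Fintype ι] [DecidableEq ι]

open scoped Kronecker in
lemma symplecticForm_eq_kronecker :
    symplecticForm ι = (1 : Matrix ι ι ℝ) ⊗ₖ !![0, 1; -1, 0] := by
  ext ⟨i, a⟩ ⟨j, b⟩
  fin_cases a <;> fin_cases b <;> by_cases h : i = j <;> simp [symplecticForm, one_apply, h]

lemma symplecticForm_transpose : (symplecticForm ι)ᵀ = -symplecticForm ι := by
  ext ⟨i, a⟩ ⟨j, b⟩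
  fin_cases a <;> fin_cases b <;> by_cases h : i = j <;>
    simp [symplecticForm, h, eq_comm]

lemma symplecticForm_transpose_mul : (symplecticForm ι)ᵀ * symplecticForm ι = 1 := by
  rw [symplecticForm_transpose, Matrix.neg_mul, symplecticForm_eq_kronecker, ← mul_kronecker_mul]
  ext ⟨i, a⟩ ⟨j, b⟩
  fin_cases a <;> fin_cases b <;> simp [one_apply]

lemma Uncertainty.real {γ : Matrix (ι × Fin 2) (ι × Fin 2) ℝ} (h : Uncertainty γ) :
    RealUncertainty (symplecticForm ι) γ :=
  realUncertainty_of_posSemidef symplecticForm_transpose h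

/-- The vacuum seed `Γ = 1` is bona fide: `M = 1 + iΩ` is Hermitian with `M² = 2M`, so
`M = (1/2) Mᴴ M`. -/
lemma uncertainty_one : Uncertainty (1 : Matrix (ι × Fin 2) (ι × Fin 2) ℝ) := by
  unfold Uncertainty
  set W := (symplecticForm ι).map Complex.ofReal with hW
  have h1 : Wᴴ = -W := by
    ext i j
    have := congrFun (congrFun (symplecticForm_transpose (ι := ι)) i) j
    simp only [transpose_apply] at this
    simp [hW, this]
  have h2 : W * W = -1 := by
    have e : W * W = (symplecticForm ι * symplecticForm ι).map Complex.ofReal :=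
      (Matrix.map_mul (f := Complex.ofRealHom)).symm
    have hΩ := symplecticForm_transpose_mul (ι := ι)
    rw [symplecticForm_transpose, Matrix.neg_mul, neg_eq_iff_eq_neg] at hΩ
    rw [e, hΩ]
    ext i j
    by_cases h : i = j <;> simp [one_apply, h]
  have h3 : (1 : Matrix (ι × Fin 2) (ι × Fin 2) ℝ).map Complex.ofReal = 1 :=
    Matrix.map_one _ (by simp) (by simp)
  rw [h3]
  have h4 : 1 + Complex.I • W =
      (1 / 2 : ℝ) • ((1 + Complex.I • W)ᴴ * (1 + Complex.I • W)) := by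
    have : (1 + Complex.I • W)ᴴ = 1 + Complex.I • W := by
      simp [conjTranspose_add, conjTranspose_smul, h1]
    rw [this, Matrix.add_mul, Matrix.mul_add, Matrix.mul_add, Matrix.smul_mul, Matrix.smul_mul,
      Matrix.mul_smul W, h2, smul_smul, Complex.I_mul_I]
    simp only [Matrix.one_mul, Matrix.mul_one, smul_neg, neg_smul, one_smul, neg_neg]
    module
  rw [h4]
  exact (posSemidef_conjTranspose_mul_self _).smul (by norm_num)

end Symplectic

/-! ### Regrouping the quadratures by party -/

/-- Regrouping the quadratures by party puts a bipartite matrix in block form. -/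
lemma fromBlocks_blk {γ : Matrix ((α ⊕ β) × Fin 2) ((α ⊕ β) × Fin 2) ℝ} (hsym : γ.IsSymm) :
    γ.submatrix (Equiv.sumProdDistrib α β (Fin 2)).symm (Equiv.sumProdDistrib α β (Fin 2)).symm =
      fromBlocks (blkA γ) (offAB γ) (offAB γ)ᵀ (blkB γ) := by
  ext (i | i) (j | j)
  · rfl
  · rfl
  · exact (hsym.apply _ _).symm
  · rfl

lemma symplecticForm_sum :
    (symplecticForm (α ⊕ β)).submatrix (Equiv.sumProdDistrib α β (Fin 2)).symm
      (Equiv.sumProdDistrib α β (Fin 2)).symm =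
      fromBlocks (symplecticForm α) 0 0 (symplecticForm β) := by
  ext (i | i) (j | j) <;> simp [symplecticForm]

/-- **Correlations in pure bipartite Gaussian states.**  For a pure bipartite
covariance matrix `γ_{AB}` (real symmetric, `γ + iΩ ⪰ 0`, `det γ = 1`):
`det γ_A = det γ_B`, the one-way classical correlations equal the marginal
Rényi-2 entropy, `J₂(γ_{A|B}) = (1/2) ln det γ_A`, and consequently
`(1/2) I₂(γ_{A:B}) = J₂(γ_{A|B}) = D₂(γ_{A|B}) = S₂(γ_A)`, where
`I₂(γ_{A:B}) = (1/2) ln (det γ_A det γ_B / det γ_{AB})` and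
`D₂(γ_{A|B}) = I₂(γ_{A:B}) − J₂(γ_{A|B})`. -/
theorem renyi2_pure_state_correlations (nA nB : ℕ)
    (γ : Matrix ((Fin nA ⊕ Fin nB) × Fin 2) ((Fin nA ⊕ Fin nB) × Fin 2) ℝ)
    (hsym : γ.IsSymm) (hunc : Uncertainty γ) (hpure : γ.det = 1) :
    (blkA γ).det = (blkB γ).det ∧
    J2 γ = (1/2) * Real.log (blkA γ).det ∧
    (1/2) * ((1/2) * Real.log ((blkA γ).det * (blkB γ).det / γ.det)) = J2 γ ∧
    (1/2) * Real.log ((blkA γ).det * (blkB γ).det / γ.det) - J2 γ = J2 γ := by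
  have hG := fromBlocks_blk hsym
  have hGsym : (fromBlocks (blkA γ) (offAB γ) (offAB γ)ᵀ (blkB γ)).IsSymm := by
    rw [← hG]; exact hsym.submatrix _
  have hGdet : (fromBlocks (blkA γ) (offAB γ) (offAB γ)ᵀ (blkB γ)).det = 1 := by
    rw [← hG, det_submatrix_equiv_self, hpure]
  have hJ := symplecticForm_sum (α := Fin nA) (β := Fin nB)
  have hJ' : (fromBlocks (symplecticForm (Fin nA)) 0 0 (symplecticForm (Fin nB)))ᵀ *
      fromBlocks (symplecticForm (Fin nA)) 0 0 (symplecticForm (Fin nB)) = 1 := by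
    simp [fromBlocks_transpose, fromBlocks_multiply, symplecticForm_transpose_mul]
  have hGunc : RealUncertainty
      (fromBlocks (symplecticForm (Fin nA)) 0 0 (symplecticForm (Fin nB)))
      (fromBlocks (blkA γ) (offAB γ) (offAB γ)ᵀ (blkB γ)) := by
    refine realUncertainty_of_posSemidef ?_ ?_
    · simp [fromBlocks_transpose, symplecticForm_transpose, fromBlocks_neg]
    · rw [← hG, ← hJ]
      exact PosSemidef.submatrix hunc (Equiv.sumProdDistrib _ _ (Fin 2)).symm
  have hinv := hGunc.mul_conj_eq_one hJ' hGsym hGdet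
  have hGpd := hGunc.posDef hJ' hGsym
  have hApd : (blkA γ).PosDef := hGpd.submatrix (e := Sum.inl) Sum.inl_injective
  have hBpd : (blkB γ).PosDef := hGpd.submatrix (e := Sum.inr) Sum.inr_injective
  have hAsymm : (blkA γ).IsSymm := hsym.submatrix _
  have hBsymm : (blkB γ).IsSymm := hsym.submatrix _
  have hAB : (blkA γ).det = (blkB γ).det :=
    det_blocks_eq symplecticForm_transpose_mul hGdet hinv
  have hA0 := hApd.det_pos
  have hJ2 : J2 γ = (1/2) * Real.log (blkA γ).det := by
    refine IsGreatest.csSup_eq ⟨⟨1, isSymm_one, uncertainty_one, ?_⟩, ?_⟩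
    · rw [det_conditional_one symplecticForm_transpose_mul hBpd hGdet hinv, div_one]
    · rintro _ ⟨Γ, hΓs, hΓ, rfl⟩
      have hΓ' := hΓ.real
      have hΓpd := hΓ'.posDef symplecticForm_transpose_mul hΓs
      have hS := hGunc.conditional symplecticForm_transpose hΓ' (hBpd.add hΓpd)
      have hSsymm : (blkA γ - offAB γ * (blkB γ + Γ)⁻¹ * (offAB γ)ᵀ).IsSymm := by
        have := (hBsymm.add hΓs).inv
        refine hAsymm.sub ?_
        rw [IsSymm, transpose_mul, transpose_mul, transpose_transpose, this.eq, Matrix.mul_assoc]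
      have h1 := hS.one_le_det symplecticForm_transpose_mul hSsymm
      have h2 := div_le_self hA0.le h1
      have h3 := Real.log_le_log (by positivity) h2
      linarith
  have hlog : Real.log ((blkA γ).det * (blkB γ).det / γ.det) = 2 * Real.log (blkA γ).det := by
    rw [← hAB, hpure, div_one, Real.log_mul hA0.ne' hA0.ne']
    ring
  refine ⟨hAB, hJ2, ?_, ?_⟩
  · rw [hlog, hJ2]; ring
  · rw [hlog, hJ2]; ring
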